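/- Let S(l,2) be the signed double star consisting of a positive central edge z₁z₂, together with l ≥ 0 positive pendant edges z₁v₁,…,z₁v_l and two negative pendant edges z₁u₁, z₁u₂ attached at z₁, and 2 positive pendant edges z₂w₁, z₂w₂ attached at z₂ (so S(l,2) is a (l+6, l+3, 2) signed graph). Then for every l ≥ 0, S(l,2) is additively graceful. -/

import Mathlib

/-- A signed graph on vertex type `V`: a finite set of positive edges and a
finite set of negative edges, disjoint from one another, with no loops. -/
structure SignedGraph (V : Type) [DecidableEq V] where
  posEdges : Finset (Sym2 V)
  negEdges : Finset (Sym2 V)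
  disjoint : Disjoint posEdges negEdges
  pos_not_diag : ∀ e ∈ posEdges, ¬ e.IsDiag
  neg_not_diag : ∀ e ∈ negEdges, ¬ e.IsDiag

/-- Induced label on a positive edge: `|f u - f v|`. -/
def posLabel {V : Type} (f : V → ℕ) : Sym2 V → ℕ :=
  Sym2.lift ⟨fun u v => Nat.dist (f u) (f v), fun u v => Nat.dist_comm _ _⟩

/-- Induced label on a negative edge: `f u + f v`. -/
def negLabel {V : Type} (f : V → ℕ) : Sym2 V → ℕ :=
  Sym2.lift ⟨fun u v => f u + f v, fun u v => Nat.add_comm _ _⟩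

/-- `f` is an additively graceful labeling of the signed graph `S`:
it is an injection into `{0, 1, …, m + ⌈(n+1)/2⌉}` whose induced labels on the
positive edges are exactly `{1, …, m}` and on the negative edges exactly
`{1, …, n}`, where `m` (resp. `n`) is the number of positive (negative) edges.
(Note that `⌈(n+1)/2⌉ = (n+2)/2` with natural-number division.) -/
def IsAddGraceful {V : Type} [DecidableEq V] (S : SignedGraph V) (f : V → ℕ) : Prop :=
  Function.Injective f ∧
  (∀ v : V, f v ≤ S.posEdges.card + (S.negEdges.card + 2) / 2) ∧
  S.posEdges.image (posLabel f) = Finset.Icc 1 S.posEdges.card ∧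
  S.negEdges.image (negLabel f) = Finset.Icc 1 S.negEdges.card

/-- Vertex type of a double star: the two centers `z₁, z₂`, the `a` positive
pendant neighbours and `b` negative pendant neighbours of `z₁`, and the `c`
positive pendant neighbours of `z₂`. -/
abbrev DSV (a b c : ℕ) : Type := (Unit ⊕ Unit) ⊕ (Fin a ⊕ Fin b ⊕ Fin c)

/-- the first central vertex `z₁` -/
def z1 {a b c : ℕ} : DSV a b c := Sum.inl (Sum.inl ())
/-- the second central vertex `z₂` -/
def z2 {a b c : ℕ} : DSV a b c := Sum.inl (Sum.inr ())
/-- the end `vᵢ` of the `i`-th positive pendant edge at `z₁` -/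
def vv {a b c : ℕ} (i : Fin a) : DSV a b c := Sum.inr (Sum.inl i)
/-- the end `uᵢ` of the `i`-th negative pendant edge at `z₁` -/
def uu {a b c : ℕ} (i : Fin b) : DSV a b c := Sum.inr (Sum.inr (Sum.inl i))
/-- the end `wᵢ` of the `i`-th positive pendant edge at `z₂` -/
def ww {a b c : ℕ} (i : Fin c) : DSV a b c := Sum.inr (Sum.inr (Sum.inr i))

/-- The signed double star with a *positive* central edge `z₁z₂`,
`a` positive and `b` negative pendant edges at `z₁`, and `c` positive pendant
edges at `z₂`. -/
def doubleStarPos (a b c : ℕ) : SignedGraph (DSV a b c) where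
  posEdges :=
    {s(z1, z2)} ∪ Finset.univ.image (fun i : Fin a => s(z1, vv i)) ∪
      Finset.univ.image (fun i : Fin c => s(z2, ww i))
  negEdges := Finset.univ.image (fun i : Fin b => s(z1, uu i))
  disjoint := by
    rw [Finset.disjoint_left]
    intro e he1 he2
    simp only [Finset.mem_union, Finset.mem_singleton, Finset.mem_image,
      Finset.mem_univ, true_and] at he1 he2
    obtain ⟨j, rfl⟩ := he2
    rcases he1 with (h | ⟨i, h⟩) | ⟨i, h⟩ <;>
      simp [z1, z2, vv, uu, ww, Sym2.eq_iff] at h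
  pos_not_diag := by
    intro e he
    simp only [Finset.mem_union, Finset.mem_singleton, Finset.mem_image,
      Finset.mem_univ, true_and] at he
    rcases he with (rfl | ⟨i, rfl⟩) | ⟨i, rfl⟩ <;>
      simp [z1, z2, vv, ww, Sym2.mk_isDiag_iff]
  neg_not_diag := by
    intro e he
    simp only [Finset.mem_image, Finset.mem_univ, true_and] at he
    obtain ⟨i, rfl⟩ := he
    simp [z1, uu, Sym2.mk_isDiag_iff]

/-! Give `z₁` the label `0`, so that every edge at `z₁` is labelled by its other end. Consecutive
integers `1, …, b` on the negative leaves, `b + 1, …, a + b` on the positive leaves of `z₁` and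
`a + b + 1` on `z₂` then leave only the positive labels `1, …, b` to be produced by the edges at
`z₂`, which `b` leaves numbered upwards from `a + b + 2` do. The largest vertex label exceeds the
number of positive edges by `b`, within the allowed excess `⌈(b + 1) / 2⌉` exactly when `b ≤ 2`. -/

theorem image_univ_add_fin_val (k n : ℕ) :
    Finset.univ.image (fun i : Fin n => k + (i : ℕ)) = Finset.Ico k (k + n) := by
  ext m
  simp only [Finset.mem_image, Finset.mem_univ, true_and, Fin.exists_iff, Finset.mem_Ico]
  constructor
  · rintro ⟨i, hi, rfl⟩
    omega
  · intro hm
    exact ⟨m - k, by omega, by omega⟩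

theorem card_image_pendant {ι V : Type*} [Fintype ι] [DecidableEq V] {g : ι → V}
    (hg : Function.Injective g) (x : V) :
    (Finset.univ.image fun i => s(x, g i)).card = Fintype.card ι :=
  Finset.card_image_of_injective _ ((Sym2.mkEmbedding x).injective.comp hg)

section DoubleStar

variable (a b c : ℕ)

theorem vv_injective : Function.Injective (vv : Fin a → DSV a b c) :=
  Sum.inr_injective.comp Sum.inl_injective

theorem uu_injective : Function.Injective (uu : Fin b → DSV a b c) :=
  Sum.inr_injective.comp (Sum.inr_injective.comp Sum.inl_injective)

theorem ww_injective : Function.Injective (ww : Fin c → DSV a b c) :=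
  Sum.inr_injective.comp (Sum.inr_injective.comp Sum.inr_injective)

theorem card_negEdges_doubleStarPos : (doubleStarPos a b c).negEdges.card = b :=
  (card_image_pendant (uu_injective a b c) z1).trans (Fintype.card_fin b)

theorem card_posEdges_doubleStarPos : (doubleStarPos a b c).posEdges.card = a + c + 1 := by
  have hcentral : Disjoint {s(z1, z2)}
      (Finset.univ.image fun i : Fin a => s((z1 : DSV a b c), vv i)) := by
    simp [z1, z2, vv]
  have hpendant : Disjoint
      ({s(z1, z2)} ∪ Finset.univ.image fun i : Fin a => s((z1 : DSV a b c), vv i))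
      (Finset.univ.image fun i : Fin c => s(z2, ww i)) := by
    simp [Finset.disjoint_left, z1, z2, vv, ww]
  simp only [doubleStarPos]
  rw [Finset.card_union_of_disjoint hpendant, Finset.card_union_of_disjoint hcentral,
    Finset.card_singleton, card_image_pendant (vv_injective a b c),
    card_image_pendant (ww_injective a b c), Fintype.card_fin, Fintype.card_fin]
  omega

variable {a b c} in
theorem image_posLabel_doubleStarPos (f : DSV a b c → ℕ) :
    (doubleStarPos a b c).posEdges.image (posLabel f) =
      {Nat.dist (f z1) (f z2)} ∪ Finset.univ.image (fun i => Nat.dist (f z1) (f (vv i))) ∪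
        Finset.univ.image (fun i => Nat.dist (f z2) (f (ww i))) := by
  simp only [doubleStarPos, Finset.image_union, Finset.image_singleton, Finset.image_image]
  rfl

variable {a b c} in
theorem image_negLabel_doubleStarPos (f : DSV a b c → ℕ) :
    (doubleStarPos a b c).negEdges.image (negLabel f) =
      Finset.univ.image (fun i => f z1 + f (uu i)) := by
  simp only [doubleStarPos, Finset.image_image]
  rfl

/-- The vertex labeling of a double star by consecutive blocks of integers, in the order
`z₁, uᵢ, vᵢ, z₂, wᵢ`. Leaves are indexed from `0`, and the summand `1 + i` in the label of `wᵢ` is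
the label of the edge `z₂wᵢ`. -/
def doubleStarLabeling : DSV a b c → ℕ
  | Sum.inl (Sum.inl _) => 0
  | Sum.inl (Sum.inr _) => a + b + 1
  | Sum.inr (Sum.inl i) => b + 1 + i
  | Sum.inr (Sum.inr (Sum.inl i)) => 1 + i
  | Sum.inr (Sum.inr (Sum.inr i)) => a + b + 1 + (1 + i)

theorem doubleStarLabeling_injective : Function.Injective (doubleStarLabeling a b c) := by
  rintro ((_ | _) | (i | i | i)) ((_ | _) | (j | j | j)) h <;>
    simp only [doubleStarLabeling] at h <;> grind

theorem doubleStarLabeling_le (v : DSV a b c) : doubleStarLabeling a b c v ≤ a + b + c + 1 := by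
  rcases v with (_ | _) | (i | i | i) <;> simp only [doubleStarLabeling] <;> omega

theorem image_posLabel_doubleStarLabeling :
    (doubleStarPos a b c).posEdges.image (posLabel (doubleStarLabeling a b c)) =
      Finset.Icc 1 c ∪ Finset.Icc (b + 1) (a + b + 1) := by
  have hdist (i : Fin c) : Nat.dist (a + b + 1) (a + b + 1 + (1 + i)) = 1 + i := by
    rw [Nat.dist_eq_sub_of_le (Nat.le_add_right _ _), Nat.add_sub_cancel_left]
  simp only [image_posLabel_doubleStarPos, z1, z2, vv, ww, doubleStarLabeling,
    Nat.dist_zero_left, hdist, image_univ_add_fin_val]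
  ext k
  simp only [Finset.mem_union, Finset.mem_singleton, Finset.mem_Ico, Finset.mem_Icc]
  omega

theorem image_negLabel_doubleStarLabeling :
    (doubleStarPos a b c).negEdges.image (negLabel (doubleStarLabeling a b c)) =
      Finset.Icc 1 b := by
  simp only [image_negLabel_doubleStarPos, z1, uu, doubleStarLabeling, zero_add,
    image_univ_add_fin_val]
  rw [Nat.add_comm 1 b, Finset.Ico_add_one_right_eq_Icc]

end DoubleStar

theorem doubleStar_twoNeg_r2_addGraceful_general (a : ℕ) {b : ℕ} (hb : b ≤ 2) :
    ∃ f : DSV a b b → ℕ, IsAddGraceful (doubleStarPos a b b) f := by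
  refine ⟨doubleStarLabeling a b b, doubleStarLabeling_injective a b b, fun v => ?_, ?_, ?_⟩
  · have hv := doubleStarLabeling_le a b b v
    rw [card_posEdges_doubleStarPos, card_negEdges_doubleStarPos]
    omega
  · rw [image_posLabel_doubleStarLabeling, card_posEdges_doubleStarPos]
    ext k
    simp only [Finset.mem_union, Finset.mem_Icc]
    omega
  · rw [image_negLabel_doubleStarLabeling, card_negEdges_doubleStarPos]

/-- The signed double star with positive central edge `z₁z₂`,
`l ≥ 0` positive and `2` negative pendant edges at `z₁`, and `2` positive
pendant edges at `z₂`, is additively graceful for every `l`. -/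
theorem doubleStar_twoNeg_r2_addGraceful (l : ℕ) :
    ∃ f : DSV l 2 2 → ℕ, IsAddGraceful (doubleStarPos l 2 2) f :=
  doubleStar_twoNeg_r2_addGraceful_general l le_rfl
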